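/- (Equilibrium distribution along the characteristic curve) Let $\pi$ be a family $(\pi_{\mathbf{j}})_{\mathbf{j}\in\mathbb{Z}_+^n}$ of positive numbers summing to 1 satisfying, for $s\in[0,1)$, the equation $H(s,u_2(s),\dots,u_n(s))\pi_{\mathbf{0}}+A(s,u_2(s),\dots,u_n(s))\sum_{\mathbf{j}\ne\mathbf{0}}\pi_{\mathbf{j}}s^{j_1}u_2(s)^{j_2}\cdots u_n(s)^{j_n}+\sum_{k=1}^n B_k(s,u_2(s),\dots,u_n(s))\sum_{\mathbf{j}\ne\mathbf{0}}\pi_{\mathbf{j}}j_k s^{j_1}\cdots u_k(s)^{j_k-1}\cdots u_n(s)^{j_n}=0$. Then $\pi(s):=\sum_{\mathbf{j}}\pi_{\mathbf{j}}s^{j_1}u_2(s)^{j_2}\cdots u_n(s)^{j_n}$ satisfies $\pi(s)=\pi_{\mathbf{0}}\Big[1+\int_0^s \frac{-H(y,u_2(y),\dots,u_n(y))}{B_1(y,u_2(y),\dots,u_n(y))}\,e^{-\int_y^s \frac{A(x,u_2(x),\dots,u_n(x))}{B_1(x,u_2(x),\dots,u_n(x))}dx}\,dy\Big]$ for $s\in[0,1)$.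 -/

import Mathlib

open Filter Topology Set

noncomputable def gen {n : ℕ} (a : (Fin n → ℕ) → ℝ) (u : Fin n → ℝ) : ℝ :=
  ∑' j : Fin n → ℕ, a j * ∏ l, u l ^ j l

def unitvec {n : ℕ} (k : Fin n) : Fin n → ℕ := fun l => if l = k then 1 else 0

theorem abs_prod_pow_le_one {n : ℕ} {u : Fin n → ℝ} (hu : ∀ l, |u l| ≤ 1) (j : Fin n → ℕ) :
    |∏ l, u l ^ j l| ≤ 1 := by
  rw [Finset.abs_prod]
  refine Finset.prod_le_one (fun _ _ => abs_nonneg _) fun l _ => ?_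
  rw [abs_pow]
  exact pow_le_one₀ (abs_nonneg _) (hu l)

theorem abs_mul_prod_pow_le {n : ℕ} {u : Fin n → ℝ} (hu : ∀ l, |u l| ≤ 1) (x : ℝ)
    (j : Fin n → ℕ) : |x * ∏ l, u l ^ j l| ≤ |x| := by
  rw [abs_mul]
  exact mul_le_of_le_one_right (abs_nonneg _) (abs_prod_pow_le_one hu j)

theorem summable_gen {n : ℕ} {a : (Fin n → ℕ) → ℝ} (ha : Summable a) {u : Fin n → ℝ}
    (hu : ∀ l, |u l| ≤ 1) : Summable fun j : Fin n → ℕ => a j * ∏ l, u l ^ j l :=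
  .of_norm_bounded ha.abs fun j => abs_mul_prod_pow_le hu (a j) j

theorem continuousOn_gen {n : ℕ} {a : (Fin n → ℕ) → ℝ} (ha : Summable a) :
    ContinuousOn (gen a) {u | ∀ l, |u l| ≤ 1} :=
  continuousOn_tsum (fun j => by fun_prop) ha.abs
    fun j _ hu => abs_mul_prod_pow_le hu (a j) j

theorem prod_zero_pow_eq_zero {n : ℕ} {j : Fin n → ℕ} (hj : j ≠ 0) :
    ∏ l, (0 : Fin n → ℝ) l ^ j l = 0 := by
  obtain ⟨l, hl⟩ := Function.ne_iff.mp hj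
  exact Finset.prod_eq_zero (Finset.mem_univ l) (by simpa using hl)

theorem gen_zero {n : ℕ} (a : (Fin n → ℕ) → ℝ) : gen a 0 = a 0 := by
  rw [gen, tsum_eq_single 0 fun j hj => by rw [prod_zero_pow_eq_zero hj, mul_zero]]
  simp

theorem gen_eq_add_tsum_ne {n : ℕ} {a : (Fin n → ℕ) → ℝ} (ha : Summable a) {u : Fin n → ℝ}
    (hu : ∀ l, |u l| ≤ 1) (e : Fin n → ℕ) :
    gen a u = a e * ∏ l, u l ^ e l +
      ∑' j : {j : Fin n → ℕ // j ≠ e}, a j.1 * ∏ l, u l ^ j.1 l := by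
  have := (summable_gen ha hu).sum_add_tsum_subtype_compl {e}
  simp only [Finset.sum_singleton] at this
  rw [gen, ← this]
  congr 1
  exact (Equiv.subtypeEquivRight (by simp)).tsum_eq
    (fun j : {j : Fin n → ℕ // j ≠ e} => a j.1 * ∏ l, u l ^ j.1 l)

theorem prod_pow_unitvec {n : ℕ} (u : Fin n → ℝ) (k : Fin n) :
    ∏ l, u l ^ unitvec k l = u k := by
  rw [Finset.prod_eq_single k] <;> simp +contextual [unitvec]

/-- A branching generating function differs from its linear part by at most the total
branching rate on the unit polydisc. -/
theorem abs_gen_sub_le {n : ℕ} {b : (Fin n → ℕ) → ℝ} {k : Fin n}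
    (hnn : ∀ j, j ≠ unitvec k → 0 ≤ b j) (hb : Summable b)
    (hval : HasSum (fun j : {j : Fin n → ℕ // j ≠ unitvec k} => b j.1) (-(b (unitvec k))))
    {u : Fin n → ℝ} (hu : ∀ l, |u l| ≤ 1) :
    |gen b u - b (unitvec k) * u k| ≤ -(b (unitvec k)) := by
  rw [gen_eq_add_tsum_ne hb hu (unitvec k), prod_pow_unitvec, add_sub_cancel_left,
    ← Real.norm_eq_abs]
  refine tsum_of_norm_bounded hval fun j => ?_
  exact (abs_mul_prod_pow_le hu _ _).trans_eq (abs_of_nonneg (hnn j.1 j.2))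

theorem exists_nat_mul_pow_pred_le {r : ℝ} (hr0 : 0 ≤ r) (hr : r < 1) :
    ∃ C : ℝ, 0 ≤ C ∧ ∀ m : ℕ, (m : ℝ) * r ^ (m - 1) ≤ C := by
  have h1 : Summable fun m : ℕ => (m : ℝ) * r ^ m := by
    simpa using summable_pow_mul_geometric_of_norm_lt_one (R := ℝ) 1
      (r := r) (by rwa [Real.norm_of_nonneg hr0])
  have h2 : Summable fun m : ℕ => ((m + 1 : ℕ) : ℝ) * r ^ m := by
    refine (h1.add (summable_geometric_of_lt_one hr0 hr)).congr fun m => ?_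
    push_cast; ring
  refine ⟨∑' m : ℕ, ((m + 1 : ℕ) : ℝ) * r ^ m, tsum_nonneg fun m => by positivity, fun m => ?_⟩
  cases m with
  | zero => simpa using tsum_nonneg fun m : ℕ => (by positivity : 0 ≤ ((m + 1 : ℕ) : ℝ) * r ^ m)
  | succ m => exact h2.le_tsum m fun i _ => by positivity

theorem hasDerivAt_monomial {n : ℕ} (j : Fin n → ℕ) {c : ℝ → Fin n → ℝ} {v : Fin n → ℝ} {s : ℝ}
    (hc : ∀ k, HasDerivAt (fun r => c r k) (v k) s) :
    HasDerivAt (fun r => ∏ l, c r l ^ j l)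
      (∑ k, (j k : ℝ) * (∏ l, c s l ^ (j l - if l = k then 1 else 0)) * v k) s := by
  refine (HasDerivAt.fun_finsetProd (u := Finset.univ)
    fun k _ => (hc k).fun_pow (j k)).congr_deriv ?_
  refine Finset.sum_congr rfl fun k _ => ?_
  rw [← Finset.mul_prod_erase Finset.univ (fun l => c s l ^ (j l - if l = k then 1 else 0))
    (Finset.mem_univ k)]
  have : ∏ l ∈ Finset.univ.erase k, c s l ^ (j l - if l = k then 1 else 0) =
      ∏ l ∈ Finset.univ.erase k, c s l ^ j l :=
    Finset.prod_congr rfl fun l hl => by simp [Finset.ne_of_mem_erase hl]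
  rw [this]
  simp only [if_true, smul_eq_mul]
  ring

theorem abs_prod_pow_sub_le {n : ℕ} {u : Fin n → ℝ} {r : ℝ} (hr : r < 1)
    (hu : ∀ l, |u l| ≤ r) (j : Fin n → ℕ) (k : Fin n) :
    |∏ l, u l ^ (j l - if l = k then 1 else 0)| ≤ r ^ (j k - 1) := by
  rw [← Finset.mul_prod_erase Finset.univ _ (Finset.mem_univ k), abs_mul, abs_pow, if_pos rfl,
    Finset.abs_prod]
  refine (mul_le_of_le_one_right (by positivity) ?_).trans
    (pow_le_pow_left₀ (abs_nonneg _) (hu k) _)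
  refine Finset.prod_le_one (fun _ _ => abs_nonneg _) fun l _ => ?_
  rw [abs_pow]
  exact pow_le_one₀ (abs_nonneg _) ((hu l).trans hr.le)

/-- Chain rule for a generating function along a curve in the open unit polydisc. -/
theorem hasDerivAt_gen_comp {n : ℕ} {p : (Fin n → ℕ) → ℝ} (hp : Summable p)
    {c v : ℝ → Fin n → ℝ} {t r D : ℝ} (hr0 : 0 ≤ r) (hr : r < 1)
    (hc : ∀ s ∈ Ioo 0 t, ∀ k, |c s k| ≤ r) (hD : ∀ s ∈ Ioo 0 t, ∀ k, |v s k| ≤ D)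
    (hder : ∀ s ∈ Ioo 0 t, ∀ k, HasDerivAt (fun r => c r k) (v s k) s)
    {S : Fin n → ℝ} {s : ℝ} (hs : s ∈ Ioo 0 t)
    (hS : ∀ k, HasSum (fun j : Fin n → ℕ =>
      p j * (j k : ℝ) * ∏ l, c s l ^ (j l - if l = k then 1 else 0)) (S k)) :
    HasDerivAt (fun x => gen p (c x)) (∑ k, v s k * S k) s := by
  obtain ⟨C, hC0, hC⟩ := exists_nat_mul_pow_pred_le hr0 hr
  have hsum := hasSum_sum (s := Finset.univ) fun k _ => (hS k).mul_left (v s k)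
  refine (hasDerivAt_tsum_of_isPreconnected (u := fun j => |p j| * (n * (C * D)))
    (hp.abs.mul_right _) isOpen_Ioo isPreconnected_Ioo
    (fun j y hy => (hasDerivAt_monomial j (hder y hy)).const_mul (p j)) (fun j y hy => ?_) hs
    (summable_gen hp fun l => (hc s hs l).trans hr.le) hs).congr_deriv ?_
  · rw [norm_mul, Real.norm_eq_abs]
    refine mul_le_mul_of_nonneg_left ?_ (abs_nonneg _)
    refine (norm_sum_le_of_le (f := fun k => (j k : ℝ) *
      (∏ l, c y l ^ (j l - if l = k then 1 else 0)) * v y k) _ (n := fun _ => C * D)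
      fun k _ => ?_).trans (by simp)
    rw [Real.norm_eq_abs, abs_mul, abs_mul, Nat.abs_cast]
    refine mul_le_mul ?_ (hD y hy k) (abs_nonneg _) hC0
    exact (mul_le_mul_of_nonneg_left (abs_prod_pow_sub_le hr (hc y hy) j k)
      (Nat.cast_nonneg _)).trans (hC _)
  · rw [← hsum.tsum_eq]
    refine tsum_congr fun j => ?_
    rw [Finset.mul_sum]
    exact Finset.sum_congr rfl fun k _ => by ring

/-- Variation of constants for a scalar linear differential equation. -/
theorem eq_integral_of_linear_ode {α η Q : ℝ → ℝ} {s : ℝ} (hs : 0 ≤ s)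
    (hα : ContinuousOn α (Icc 0 s)) (hη : ContinuousOn η (Icc 0 s))
    (hQ : ContinuousOn Q (Icc 0 s)) (hQ0 : Q 0 = 0)
    (hder : ∀ y ∈ Ioo 0 s, HasDerivAt Q (η y - α y * Q y) y) :
    Q s = ∫ y in (0:ℝ)..s, η y * Real.exp (-(∫ x in y..s, α x)) := by
  have hI : ContinuousOn (fun y => ∫ x in y..s, α x) (Icc 0 s) := by
    have := intervalIntegral.continuousOn_primitive_interval_left (f := α) (a := 0) (b := s)
      (μ := MeasureTheory.volume)
      (by rw [uIcc_of_le hs]; exact hα.integrableOn_Icc)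
    rwa [uIcc_of_le hs] at this
  have hE : ContinuousOn (fun y => Real.exp (-(∫ x in y..s, α x))) (Icc 0 s) := hI.neg.rexp
  rw [intervalIntegral.integral_eq_sub_of_hasDerivAt_of_le
    (f := fun y => Q y * Real.exp (-(∫ x in y..s, α x)))
    (f' := fun y => η y * Real.exp (-(∫ x in y..s, α x))) hs (hQ.mul hE) (fun y hy => ?_)
    ((hη.mul hE).intervalIntegrable_of_Icc hs)]
  · simp [hQ0]
  · have hd : HasDerivAt (fun y => ∫ x in y..s, α x) (-α y) y := by
      refine intervalIntegral.integral_hasDerivAt_left ?_ ?_ ?_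
      · exact (hα.mono (Icc_subset_Icc_left hy.1.le)).intervalIntegrable_of_Icc hy.2.le
      · exact (hα.mono Ioo_subset_Icc_self).stronglyMeasurableAtFilter isOpen_Ioo y hy
      · exact hα.continuousAt (Icc_mem_nhds hy.1 hy.2)
    refine ((hder y hy).mul hd.fun_neg.exp).congr_deriv ?_
    ring

/-- A function whose derivative is bounded below by `-M` times itself stays positive. -/
theorem pos_of_neg_mul_le_deriv {f f' : ℝ → ℝ} {τ M : ℝ} (hτ : 0 ≤ τ)
    (hf : ContinuousOn f (Icc 0 τ)) (h0 : 0 < f 0)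
    (hder : ∀ x ∈ Ioo 0 τ, HasDerivAt f (f' x) x)
    (hle : ∀ x ∈ Ioo 0 τ, -(M * f x) ≤ f' x) : 0 < f τ := by
  have hmono : MonotoneOn (fun x => f x * Real.exp (M * x)) (Icc 0 τ) := by
    have hd : ∀ x ∈ Ioo 0 τ, HasDerivAt (fun x => f x * Real.exp (M * x))
        ((f' x + M * f x) * Real.exp (M * x)) x := fun x hx =>
      ((hder x hx).mul ((hasDerivAt_id x).const_mul M).exp).congr_deriv (by simp; ring)
    refine monotoneOn_of_deriv_nonneg (convex_Icc 0 τ) (hf.mul (by fun_prop)) ?_ ?_ <;>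
      rw [interior_Icc] <;> intro x hx
    · exact (hd x hx).differentiableAt.differentiableWithinAt
    · rw [(hd x hx).deriv]
      exact mul_nonneg (by linarith [hle x hx]) (Real.exp_pos _).le
  have := hmono (left_mem_Icc.2 hτ) (right_mem_Icc.2 hτ) hτ
  simp only [mul_zero, Real.exp_zero, mul_one] at this
  exact pos_of_mul_pos_left (h0.trans_le this) (Real.exp_pos _).le

/-- A function with derivative zero at the origin cannot have a derivative blowing up to the
right of it. -/
theorem not_eventually_one_le_deriv {f f' : ℝ → ℝ} (h0 : HasDerivAt f 0 0) {δ : ℝ} (hδ : 0 < δ)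
    (hder : ∀ x ∈ Ioo 0 δ, HasDerivAt f (f' x) x) : ¬ ∀ x ∈ Ioo 0 δ, 1 ≤ f' x := by
  intro hge
  have hs : Tendsto (slope f 0) (𝓝[>] 0) (𝓝 0) :=
    (hasDerivAt_iff_tendsto_slope.1 h0).mono_left
      (nhdsWithin_mono _ fun x hx => ne_of_gt hx)
  obtain ⟨x, hx1, hx⟩ := ((hs.eventually (gt_mem_nhds one_pos)).and
    (Ioo_mem_nhdsGT hδ)).exists
  obtain ⟨y, hy, hyx⟩ := exists_hasDerivAt_eq_slope f f' hx.1
    (fun z hz => (hz.1.eq_or_lt.elim (fun h => h ▸ h0.continuousAt)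
      fun h => (hder z ⟨h, hz.2.trans_lt hx.2⟩).continuousAt).continuousWithinAt)
    fun z hz => hder z ⟨hz.1, hz.2.trans hx.2⟩
  rw [slope_def_field, ← hyx] at hx1
  exact absurd (hge y ⟨hy.1, hy.2.trans hx.2⟩) (not_le.2 hx1)

/-- A characteristic curve issued from the origin stays in the open unit polydisc. -/
theorem abs_curve_lt_one {n : ℕ} {b : Fin n → (Fin n → ℕ) → ℝ}
    (hbnn : ∀ i j, j ≠ unitvec i → 0 ≤ b i j) (hbsum : ∀ i, Summable (b i))
    (hbval : ∀ i, HasSum (fun j : {j : Fin n → ℕ // j ≠ unitvec i} => b i j.1)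
      (-(b i (unitvec i))))
    {i0 : Fin n} {c : ℝ → Fin n → ℝ} (hci0 : ∀ s ∈ Ico (0:ℝ) 1, c s i0 = s) (hc0 : c 0 = 0)
    (hcont : ContinuousOn c (Ico 0 1))
    (hode : ∀ s ∈ Ico (0:ℝ) 1, ∀ k, k ≠ i0 →
      HasDerivAt (fun r => c r k) (gen (b k) (c s) / gen (b i0) (c s)) s)
    (hB : ∀ s ∈ Ico (0:ℝ) 1, 0 < gen (b i0) (c s)) :
    ∀ t ∈ Ico (0:ℝ) 1, ∀ k, |c t k| < 1 := by
  by_contra! hex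
  obtain ⟨t, ht, k₀, hk₀⟩ := hex
  have hcoord : ∀ k, ContinuousOn (fun s => c s k) (Icc 0 t) := fun k =>
    (continuous_apply k).comp_continuousOn (hcont.mono (Icc_subset_Ico_right ht.2))
  have hclosed : IsCompact (⋃ k, Icc 0 t ∩ (fun s => |c s k|) ⁻¹' Ici 1) :=
    isCompact_iUnion fun k => isCompact_Icc.of_isClosed_subset
      ((hcoord k).abs.preimage_isClosed_of_isClosed isClosed_Icc isClosed_Ici) inter_subset_left
  obtain ⟨τ, hτmem, hτmin⟩ := hclosed.exists_isLeast
    ⟨t, mem_iUnion.2 ⟨k₀, right_mem_Icc.2 ht.1, hk₀⟩⟩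
  obtain ⟨k, hτ, hkτ⟩ := mem_iUnion.1 hτmem
  have hkτ : 1 ≤ |c τ k| := hkτ
  have hlt : ∀ s ∈ Ico 0 τ, ∀ l, |c s l| < 1 := by
    intro s hs l
    by_contra! hl
    exact absurd (hτmin (mem_iUnion.2 ⟨l, ⟨hs.1, hs.2.le.trans hτ.2⟩, hl⟩)) (not_le.2 hs.2)
  have hsub : Icc 0 τ ⊆ Ico 0 1 := Icc_subset_Ico_right (hτ.2.trans_lt ht.2)
  have hτpos : 0 < τ := by
    refine hτ.1.lt_of_ne fun h0 => ?_
    rw [← h0, hc0] at hkτ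
    norm_num at hkτ
  have hle : ∀ s ∈ Icc 0 τ, ∀ l, |c s l| ≤ 1 := by
    intro s hs l
    refine ContinuousWithinAt.closure_le (s := Ico 0 τ) ?_
      (((hcoord l).abs s ⟨hs.1, hs.2.trans hτ.2⟩).mono
        (Ico_subset_Icc_self.trans (Icc_subset_Icc_right hτ.2)))
      continuousWithinAt_const fun y hy => (hlt y hy l).le
    rwa [closure_Ico hτpos.ne]
  have hBcont : ContinuousOn (fun s => gen (b i0) (c s)) (Icc 0 τ) :=
    (continuousOn_gen (hbsum i0)).comp (hcont.mono hsub) hle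
  obtain ⟨y, hy, hymin⟩ := isCompact_Icc.exists_isMinOn ⟨0, left_mem_Icc.2 hτ.1⟩ hBcont
  have hki0 : k ≠ i0 := by
    rintro rfl
    rw [hci0 τ (hsub (right_mem_Icc.2 hτ.1)), abs_of_nonneg hτ.1] at hkτ
    exact absurd hkτ (not_le.2 (hsub (right_mem_Icc.2 hτ.1)).2)
  have hmpos := hB y (hsub hy)
  set m := gen (b i0) (c y)
  set q := -(b k (unitvec k)) with hq
  have hq0 : 0 ≤ q := by
    rw [hq, ← (hbval k).tsum_eq]
    exact tsum_nonneg fun j => hbnn k j.1 j.2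
  have hquot : ∀ x ∈ Ioo 0 τ, gen (b k) (c x) / gen (b i0) (c x) ≤ q / m * (1 - c x k) ∧
      -(q / m * (1 + c x k)) ≤ gen (b k) (c x) / gen (b i0) (c x) := by
    intro x hx
    have hxI := Ioo_subset_Icc_self hx
    have hb := abs_le.1 (abs_gen_sub_le (hbnn k) (hbsum k) (hbval k) (hle x hxI))
    have hcx := abs_le.1 (hle x hxI k)
    have hmx : m ≤ gen (b i0) (c x) := hymin hxI
    have hpos := hmpos.trans_le hmx
    have hqm : q / m * gen (b i0) (c x) ≥ q := by
      rw [div_mul_eq_mul_div, ge_iff_le, le_div_iff₀ hmpos]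
      exact mul_le_mul_of_nonneg_left hmx hq0
    have hbk : b k (unitvec k) = -q := by rw [hq, neg_neg]
    rw [hbk] at hb
    rw [div_le_iff₀ hpos, le_div_iff₀ hpos]
    constructor
    · nlinarith [mul_le_mul_of_nonneg_right hqm (sub_nonneg.2 hcx.2)]
    · nlinarith [mul_le_mul_of_nonneg_right hqm (neg_le_iff_add_nonneg'.1 hcx.1)]
  have hcτ := (hcoord k).mono (Icc_subset_Icc_right hτ.2)
  have hd : ∀ x ∈ Ioo 0 τ, _ := fun x hx => hode x (hsub (Ioo_subset_Icc_self hx)) k hki0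
  have hup : 0 < 1 - c τ k :=
    pos_of_neg_mul_le_deriv (f := fun x => 1 - c x k) (M := q / m) hτ.1
      (continuousOn_const.sub hcτ) (by simp [hc0]) (fun x hx => (hd x hx).const_sub 1)
      fun x hx => neg_le_neg (hquot x hx).1
  have hlow : 0 < 1 + c τ k :=
    pos_of_neg_mul_le_deriv (f := fun x => 1 + c x k) (M := q / m) hτ.1
      (continuousOn_const.add hcτ) (by simp [hc0]) (fun x hx => (hd x hx).const_add 1)
      fun x hx => (hquot x hx).2
  exact absurd hkτ (not_le.2 (abs_lt.2 ⟨by linarith, by linarith⟩))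

/-- If some branching function is positive at the origin, then so is the one driving the
characteristic curve. -/
theorem gen_pos_of_curve {n : ℕ} {b : Fin n → (Fin n → ℕ) → ℝ}
    (hbsum : ∀ i, Summable (b i)) {i0 k : Fin n} {c : ℝ → Fin n → ℝ} (hc0 : c 0 = 0)
    (hcont : ContinuousOn c (Ico 0 1))
    (hode : ∀ s ∈ Ico (0:ℝ) 1, k ≠ i0 →
      HasDerivAt (fun r => c r k) (gen (b k) (c s) / gen (b i0) (c s)) s)
    (hB1pos : ∀ s ∈ Ioo (0:ℝ) 1, 0 < gen (b i0) (c s))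
    (hk : 0 < gen (b k) (c 0)) (hnn : 0 ≤ gen (b i0) (c 0)) : 0 < gen (b i0) (c 0) := by
  refine hnn.lt_of_ne fun hzero => ?_
  have hki0 : k ≠ i0 := by
    rintro rfl
    exact hk.ne hzero
  have hc : Tendsto c (𝓝[>] 0) (𝓝 0) := by
    have := hcont 0 ⟨le_rfl, one_pos⟩
    rw [ContinuousWithinAt, hc0] at this
    exact this.mono_left (nhdsWithin_le_of_mem
      (mem_of_superset (Ioo_mem_nhdsGT one_pos) Ioo_subset_Ico_self))
  have hcube : {u : Fin n → ℝ | ∀ l, |u l| ≤ 1} ∈ 𝓝 (0 : Fin n → ℝ) := by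
    filter_upwards [Metric.closedBall_mem_nhds (0 : Fin n → ℝ) one_pos] with u hu l
    exact (norm_le_pi_norm u l).trans (mem_closedBall_zero_iff.1 hu)
  have htend : ∀ i, Tendsto (fun s => gen (b i) (c s)) (𝓝[>] 0) (𝓝 (gen (b i) (c 0))) := by
    intro i
    rw [hc0]
    exact ((continuousOn_gen (hbsum i)).continuousAt hcube).tendsto.comp hc
  have hev : ∀ᶠ s in 𝓝[>] (0:ℝ), gen (b i0) (c s) < gen (b k) (c s) :=
    (htend i0).eventually_lt (htend k) (hzero ▸ hk)
  obtain ⟨δ, hδ, hδs⟩ := mem_nhdsGT_iff_exists_Ioo_subset.1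
    (inter_mem hev (Ioo_mem_nhdsGT (one_pos : (0:ℝ) < 1)))
  refine not_eventually_one_le_deriv (f := fun r => c r k) ?_ hδ
    (fun x hx => hode x (Ioo_subset_Ico_self (hδs hx).2) hki0) fun x hx => ?_
  · simpa [← hzero] using hode 0 ⟨le_rfl, one_pos⟩ hki0
  · exact (one_le_div (hB1pos x (hδs hx).2)).2 (hδs hx).1.le

/-- equilibrium distribution along the characteristic curve:
if the probability distribution `(π_j)` satisfies the stationary equation
along the curve `(s, u_2(s),…,u_n(s))`, then its generating function along
the curve is `π(s) = π_0 [1 + ∫_0^s (-H/B_1) e^{-∫_y^s A/B_1} dy]`. -/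
theorem stmt_11 {n : ℕ} (hn : 0 < n) (h a : (Fin n → ℕ) → ℝ)
    (b : Fin n → (Fin n → ℕ) → ℝ)
    (hhnn : ∀ j : Fin n → ℕ, j ≠ 0 → 0 ≤ h j)
    (hhsum : Summable h)
    (hhval : HasSum (fun j : {j : Fin n → ℕ // j ≠ 0} => h j.1) (-h 0))
    (hhpos : 0 < -h 0)
    (hann : ∀ j : Fin n → ℕ, j ≠ 0 → 0 ≤ a j)
    (hasum : Summable a)
    (haval : HasSum (fun j : {j : Fin n → ℕ // j ≠ 0} => a j.1) (-a 0))
    (hapos : 0 < -a 0)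
    (hbnn : ∀ i j, j ≠ unitvec i → 0 ≤ b i j)
    (hbsum : ∀ i, Summable (b i))
    (hbval : ∀ i, HasSum (fun j : {j : Fin n → ℕ // j ≠ unitvec i} => b i j.1)
      (-(b i (unitvec i))))
    (hbpos : ∀ i, 0 < -(b i (unitvec i)))
    (i0 : Fin n) (hi0 : i0 = ⟨0, hn⟩)
    -- the characteristic curve on `[0,1)`, with `B_1 > 0` along it
    (c : ℝ → Fin n → ℝ)
    (hci0 : ∀ s ∈ Ico (0:ℝ) 1, c s i0 = s)
    (hc0 : ∀ k, k ≠ i0 → c 0 k = 0)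
    (hode : ∀ s ∈ Ico (0:ℝ) 1, ∀ k, k ≠ i0 →
      HasDerivAt (fun r => c r k) (gen (b k) (c s) / gen (b i0) (c s)) s)
    (hB1pos : ∀ s ∈ Ioo (0:ℝ) 1, 0 < gen (b i0) (c s))
    -- `π` a probability distribution with positive weights
    (π : (Fin n → ℕ) → ℝ)
    (hπpos : ∀ j, 0 < π j)
    (hπ1 : HasSum π 1)
    -- the derivative sums `S_k(s) = ∑_j π_j j_k s^{j_1}⋯u_k(s)^{j_k-1}⋯`
    (S : Fin n → ℝ → ℝ)
    (hS : ∀ k, ∀ s ∈ Ico (0:ℝ) 1,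
      HasSum (fun j : Fin n → ℕ =>
        π j * (j k : ℝ) * ∏ l, c s l ^ (j l - if l = k then 1 else 0)) (S k s))
    -- the stationary equation (4.4) along the curve
    (heq : ∀ s ∈ Ico (0:ℝ) 1,
      gen h (c s) * π 0 +
      gen a (c s) * (∑' j : {j : Fin n → ℕ // j ≠ 0}, π j.1 * ∏ l, c s l ^ j.1 l) +
      ∑ k, gen (b k) (c s) * S k s = 0) :
    ∀ s ∈ Ico (0:ℝ) 1,
      (∑' j : Fin n → ℕ, π j * ∏ l, c s l ^ j l) =
        π 0 * (1 + ∫ y in (0:ℝ)..s,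
          (-(gen h (c y))) / gen (b i0) (c y) *
            Real.exp (-(∫ x in y..s, gen a (c x) / gen (b i0) (c x)))) := by
  have hzero : (0:ℝ) ∈ Ico (0:ℝ) 1 := ⟨le_rfl, one_pos⟩
  have hc0' : c 0 = 0 := by
    funext k
    by_cases hk : k = i0
    · rw [hk, hci0 0 hzero, Pi.zero_apply]
    · exact hc0 k hk
  have hcont : ContinuousOn c (Ico 0 1) := by
    refine continuousOn_pi.2 fun k => ?_
    by_cases hk : k = i0
    · subst hk
      exact continuousOn_id.congr hci0
    · exact fun s hs => (hode s hs k hk).continuousAt.continuousWithinAt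
  have hB0nn : ∀ k, 0 ≤ gen (b k) (c 0) := by
    intro k
    rw [hc0', gen_zero]
    refine hbnn k 0 fun h0 => ?_
    simpa [unitvec] using congrFun h0 k
  obtain ⟨k, hk⟩ : ∃ k, 0 < gen (b k) (c 0) := by
    by_contra! hle
    have h0 := heq 0 hzero
    simp only [fun k => le_antisymm (hle k) (hB0nn k), zero_mul, Finset.sum_const_zero,
      add_zero] at h0
    rw [hc0', gen_zero, tsum_congr (fun j : {j : Fin n → ℕ // j ≠ 0} => by
      rw [prod_zero_pow_eq_zero j.2, mul_zero]), tsum_zero, mul_zero, add_zero] at h0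
    nlinarith [mul_pos hhpos (hπpos 0)]
  have hB : ∀ s ∈ Ico (0:ℝ) 1, 0 < gen (b i0) (c s) := by
    intro s hs
    rcases hs.1.eq_or_lt with rfl | hs0
    · exact gen_pos_of_curve hbsum hc0' hcont (fun s hs => hode s hs k) hB1pos hk (hB0nn i0)
    · exact hB1pos s ⟨hs0, hs.2⟩
  have hlt := abs_curve_lt_one hbnn hbsum hbval hci0 hc0' hcont hode hB
  have hgen : ∀ {p : (Fin n → ℕ) → ℝ}, Summable p →
      ContinuousOn (fun s => gen p (c s)) (Ico 0 1) := fun hp =>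
    (continuousOn_gen hp).comp hcont fun s hs l => (hlt s hs l).le
  have hquot : ∀ {p : (Fin n → ℕ) → ℝ}, Summable p →
      ContinuousOn (fun s => gen p (c s) / gen (b i0) (c s)) (Ico 0 1) := fun hp =>
    (hgen hp).div (hgen (hbsum i0)) fun s hs => (hB s hs).ne'
  have hvel : ContinuousOn (fun s k => gen (b k) (c s) / gen (b i0) (c s)) (Ico 0 1) :=
    continuousOn_pi.2 fun k => hquot (hbsum k)
  intro s hs
  have hsub : Icc 0 s ⊆ Ico 0 1 := Icc_subset_Ico_right hs.2
  have hder : ∀ y ∈ Ioo 0 s, HasDerivAt (fun x => gen π (c x))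
      (∑ k, gen (b k) (c y) / gen (b i0) (c y) * S k y) y := by
    intro y hy
    obtain ⟨x, hx, hxmax⟩ := isCompact_Icc.exists_isMaxOn ⟨0, left_mem_Icc.2 hs.1⟩
      (hcont.mono hsub).norm
    obtain ⟨D, hD⟩ := isCompact_Icc.exists_bound_of_continuousOn (hvel.mono hsub)
    refine hasDerivAt_gen_comp (v := fun s k => gen (b k) (c s) / gen (b i0) (c s))
      hπ1.summable (norm_nonneg (c x)) ((pi_norm_lt_iff one_pos).2 (hlt x (hsub hx)))
      (fun z hz l => (norm_le_pi_norm (c z) l).trans (hxmax (Ioo_subset_Icc_self hz)))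
      (fun z hz l => (norm_le_pi_norm (fun k => gen (b k) (c z) / gen (b i0) (c z)) l).trans
        (hD z (Ioo_subset_Icc_self hz)))
      (fun z hz l => ?_) hy fun k => hS k y (hsub (Ioo_subset_Icc_self hy))
    have hz1 := hsub (Ioo_subset_Icc_self hz)
    by_cases hl : l = i0
    · subst hl
      rw [div_self (hB z hz1).ne']
      refine (hasDerivAt_id z).congr_of_eventuallyEq ?_
      filter_upwards [Ioo_mem_nhds hz.1 hz.2] with w hw
      exact hci0 w (hsub (Ioo_subset_Icc_self hw))
    · exact hode z hz1 l hl
  have hmain := eq_integral_of_linear_ode (Q := fun x => gen π (c x) - π 0)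
    (α := fun x => gen a (c x) / gen (b i0) (c x))
    (η := fun x => π 0 * (-(gen h (c x)) / gen (b i0) (c x))) hs.1
    ((hquot hasum).mono hsub)
    (continuousOn_const.mul (((hgen hhsum).neg.div (hgen (hbsum i0))
      fun s hs => (hB s hs).ne').mono hsub))
    (((hgen hπ1.summable).mono hsub).sub continuousOn_const) (by simp [hc0', gen_zero])
    fun y hy => ((hder y hy).sub_const _).congr_deriv ?_
  · simp only [mul_assoc] at hmain
    rw [intervalIntegral.integral_const_mul] at hmain
    change gen π (c s) = _
    linear_combination hmain
  · have hy1 := hsub (Ioo_subset_Icc_self hy)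
    have hst := heq y hy1
    have hne := (hB y hy1).ne'
    have hsplit := gen_eq_add_tsum_ne hπ1.summable (fun l => (hlt y hy1 l).le) 0
    simp only [Pi.zero_apply, pow_zero, Finset.prod_const_one, mul_one] at hsplit
    rw [← sub_eq_iff_eq_add'.2 hsplit] at hst
    simp only [div_mul_eq_mul_div, ← Finset.sum_div]
    field_simp
    linear_combination hst
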